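/- If a valid chain element x is in a Q-stopper and x = Sum.inl p with p ∈ P, then h p = Function.invFunOn g Q p satisfies g (h p) = p and h p ∈ Q; that is, on P-elements of Q-stopper chains the witness h is a genuine right inverse of g. -/

import Mathlib

def SB.Valid {α β : Type*} (P : Set α) (Q : Set β) : α ⊕ β → Prop
  | Sum.inl p => p ∈ P
  | Sum.inr q => q ∈ Q

def SB.step {α β : Type*} (f : α → β) (g : β → α) : α ⊕ β → α ⊕ β
  | Sum.inl p => Sum.inr (f p)
  | Sum.inr q => Sum.inl (g q)

def SB.ChainLE {α β : Type*} (f : α → β) (g : β → α) : α ⊕ β → α ⊕ β → Prop :=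
  Relation.ReflTransGen (fun x y => y = SB.step f g x)

def SB.Initial {α β : Type*} (P : Set α) (Q : Set β) (f : α → β) (g : β → α) :
    α ⊕ β → Prop
  | Sum.inl p => p ∉ g '' Q
  | Sum.inr q => q ∉ f '' P

def SB.InQStopper {α β : Type*} (P : Set α) (Q : Set β) (f : α → β) (g : β → α)
    (x : α ⊕ β) : Prop :=
  ∃ q ∈ Q, SB.Initial P Q f g (Sum.inr q) ∧ SB.ChainLE f g (Sum.inr q) x

open Classical in
noncomputable def SB.h {α β : Type*} (P : Set α) (Q : Set β) (f : α → β)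
    (g : β → α) (p : α) : β :=
  if hq : SB.InQStopper P Q f g (Sum.inl p) then
    haveI : Nonempty β := ⟨hq.choose⟩
    Function.invFunOn g Q p
  else f p

/-!
A step out of a valid element lands on a valid element, so every element of a chain starting at a
valid one is valid. The only element stepping to `Sum.inl p` is some `Sum.inr q` with `g q = p`;
hence if `p` is not where such a chain starts, its predecessor there witnesses `p ∈ g '' Q`, which
is exactly what makes `Function.invFunOn g Q` invert `g` at `p`.
-/

namespace SB

variable {α β : Type*} {P : Set α} {Q : Set β} {f : α → β} {g : β → α}

theorem valid_step (hf : Set.MapsTo f P Q) (hg : Set.MapsTo g Q P) {x : α ⊕ β}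
    (hx : Valid P Q x) : Valid P Q (step f g x) :=
  match x, hx with
  | Sum.inl _, hp => hf hp
  | Sum.inr _, hq => hg hq

theorem valid_of_chainLE (hf : Set.MapsTo f P Q) (hg : Set.MapsTo g Q P) {x y : α ⊕ β}
    (hx : Valid P Q x) (hxy : ChainLE f g x y) : Valid P Q y := by
  induction hxy with
  | refl => exact hx
  | tail _ hstep ih => exact hstep ▸ valid_step hf hg ih

theorem mem_image_of_step_eq_inl {x : α ⊕ β} {p : α} (hx : Valid P Q x)
    (hstep : step f g x = Sum.inl p) : p ∈ g '' Q :=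
  match x, hx, hstep with
  | Sum.inr q, hq, hstep => ⟨q, hq, Sum.inl.inj hstep⟩

theorem mem_image_of_chainLE_inl (hf : Set.MapsTo f P Q) (hg : Set.MapsTo g Q P) {x : α ⊕ β}
    {p : α} (hx : Valid P Q x) (hne : x ≠ Sum.inl p) (hle : ChainLE f g x (Sum.inl p)) :
    p ∈ g '' Q := by
  obtain heq | ⟨y, hxy, hstep⟩ := hle.cases_tail
  · exact absurd heq.symm hne
  · exact mem_image_of_step_eq_inl (valid_of_chainLE hf hg hx hxy) hstep.symm

end SB

theorem invFunOn_right_inverse_on_qStopper_general {α β : Type*} {P : Set α} {Q : Set β}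
    {f : α → β} {g : β → α} (hf : Set.MapsTo f P Q) (hg : Set.MapsTo g Q P) {x : α ⊕ β} {p : α}
    (hx : SB.Valid P Q x) (hne : x ≠ Sum.inl p) (hle : SB.ChainLE f g x (Sum.inl p)) :
    haveI : Nonempty β := ⟨f p⟩
    g (Function.invFunOn g Q p) = p ∧ Function.invFunOn g Q p ∈ Q :=
  haveI : Nonempty β := ⟨f p⟩
  have hp : p ∈ g '' Q := SB.mem_image_of_chainLE_inl hf hg hx hne hle
  ⟨Function.invFunOn_eq hp, Function.invFunOn_mem hp⟩

theorem invFunOn_right_inverse_on_qStopper {α β : Type*} (P : Set α) (Q : Set β)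
    (f : α → β) (g : β → α)
    (hfm : Set.MapsTo f P Q) (hfi : Set.InjOn f P)
    (hgm : Set.MapsTo g Q P) (hgi : Set.InjOn g Q)
    (p : α) (hp : p ∈ P) (hs : SB.InQStopper P Q f g (Sum.inl p)) :
    haveI : Nonempty β := ⟨f p⟩
    g (Function.invFunOn g Q p) = p ∧ Function.invFunOn g Q p ∈ Q := by
  obtain ⟨q, hq, -, hle⟩ := hs
  exact invFunOn_right_inverse_on_qStopper_general (x := Sum.inr q) hfm hgm hq Sum.inr_ne_inl hle
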